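/- For all integers m ≥ 0 and l ∈ ℤ, one has S̃_{m+1,l}(q) = q^{−m−l} S̃_{m,l+1}(q) + q^{−l} S_{m,l}(q) + S_{m,l−1}(q), an identity in ℤ[q, q⁻¹]. -/

import Mathlib

/-!
The identity holds summand by summand. Writing the `q`-Pascal rule as
`C(n+1,k) = C(n,k-1) + q^k C(n,k)`, apply it to `C(m+1,ν)` in the `ν`-th summand of `S̃_{m+1,l}`.
The part with `q^ν C(m,ν)` is exactly the `ν`-th summand of `S_{m,l-1}`. In the part with
`C(m,ν-1)`, substitute `ν = μ + 1` and apply the same rule to `C(μ+1, m-l-μ)`: the two resulting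
terms are the `μ`-th summands of `q^{-m-l} S̃_{m,l+1}` and of `q^{-l} S_{m,l}`.
The Pascal rule for integer arguments (`qbinomZ_succ`) requires `0 ≤ n`; for `μ < 0` the factor
`C(m,μ)` vanishes.
-/

open LaurentPolynomial

/-- The Gaussian (q-)binomial coefficient `C(n,k)_q` as a Laurent polynomial in `q`,
defined by the q-Pascal recursion `C(n+1,k+1)_q = C(n,k)_q + q^(k+1) C(n,k+1)_q`. -/
noncomputable def qbinom : ℕ → ℕ → LaurentPolynomial ℤ
  | _, 0 => 1
  | 0, _ + 1 => 0
  | n + 1, k + 1 => qbinom n k + T ((k : ℤ) + 1) * qbinom n (k + 1)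

/-- `C(n,k)_q` for integer arguments, zero unless `0 ≤ k ≤ n`. -/
noncomputable def qbinomZ (n k : ℤ) : LaurentPolynomial ℤ :=
  if 0 ≤ k ∧ k ≤ n then qbinom n.toNat k.toNat else 0

/-- `S_{m,l}(q) = Σ_{ν∈ℤ} q^{(ν+l−m)(ν+l)+ν(ν−m)} C(m,ν)_q C(ν, m−l−ν)_q`. -/
noncomputable def Sq (m : ℕ) (l : ℤ) : LaurentPolynomial ℤ :=
  ∑ᶠ ν : ℤ,
    T ((ν + l - m) * (ν + l) + ν * (ν - m)) * (qbinomZ m ν * qbinomZ ν (m - l - ν))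

/-- `S̃_{m,l}(q) = Σ_{ν∈ℤ} q^{(ν+l−m)(ν+l−1)+ν(ν−m)} C(m,ν)_q C(ν, m−l−ν)_q`. -/
noncomputable def Sqt (m : ℕ) (l : ℤ) : LaurentPolynomial ℤ :=
  ∑ᶠ ν : ℤ,
    T ((ν + l - m) * (ν + l - 1) + ν * (ν - m)) * (qbinomZ m ν * qbinomZ ν (m - l - ν))

lemma qbinom_zero_right (n : ℕ) : qbinom n 0 = 1 := by
  cases n <;> simp [qbinom]

lemma qbinom_eq_zero_of_lt {n k : ℕ} (h : n < k) : qbinom n k = 0 := by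
  induction n generalizing k with
  | zero =>
    obtain ⟨j, rfl⟩ : ∃ j, k = j + 1 := ⟨k - 1, by omega⟩
    simp [qbinom]
  | succ n ih =>
    obtain ⟨j, rfl⟩ : ∃ j, k = j + 1 := ⟨k - 1, by omega⟩
    rw [qbinom, ih (by omega), ih (by omega)]
    simp

lemma qbinomZ_natCast (n k : ℕ) : qbinomZ n k = qbinom n k := by
  unfold qbinomZ
  split_ifs with h
  · simp
  · rw [qbinom_eq_zero_of_lt (by omega)]

lemma qbinomZ_of_neg {n k : ℤ} (h : k < 0) : qbinomZ n k = 0 :=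
  if_neg (by omega)

/-- The `q`-Pascal rule for an arbitrary integer lower argument. It fails for `n = -1`, `k = 0`. -/
lemma qbinomZ_succ (n : ℕ) (k : ℤ) :
    qbinomZ ((n : ℤ) + 1) k = qbinomZ n (k - 1) + T k * qbinomZ n k := by
  rcases lt_or_ge k 0 with hk | hk
  · simp [qbinomZ_of_neg hk, qbinomZ_of_neg (show k - 1 < 0 by omega)]
  lift k to ℕ using hk
  have hn : ((n : ℤ) + 1) = ((n + 1 : ℕ) : ℤ) := by push_cast; rfl
  rw [hn, qbinomZ_natCast, qbinomZ_natCast]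
  cases k with
  | zero => simp [qbinom_zero_right, qbinomZ_of_neg]
  | succ j =>
    have hj : (((j + 1 : ℕ) : ℤ) - 1) = (j : ℤ) := by push_cast; ring
    rw [hj, qbinomZ_natCast, qbinom]
    push_cast
    rfl

/-- Every sum of the shape of `S` or `S̃` is finite: its terms vanish unless `0 ≤ ν ≤ m`. -/
lemma finite_support_term (m : ℤ) (f g : ℤ → LaurentPolynomial ℤ) :
    (Function.support fun ν : ℤ => f ν * (qbinomZ m ν * g ν)).Finite := by
  refine (Set.finite_Icc 0 m).subset fun ν hν => ?_
  by_contra h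
  exact hν (by simp [qbinomZ, show ¬(0 ≤ ν ∧ ν ≤ m) from h])

/-- Both Pascal expansions at once, for the summand left after splitting off `S_{m,l-1}`. -/
lemma term_split (m : ℕ) (l μ : ℤ) :
    T ((μ + l - m) * (μ + l) + (μ + 1) * (μ - m)) * (qbinomZ m μ * qbinomZ (μ + 1) (m - l - μ)) =
      T (-(m : ℤ) - l) * (T ((μ + (l + 1) - m) * (μ + (l + 1) - 1) + μ * (μ - m)) *
        (qbinomZ m μ * qbinomZ μ (m - (l + 1) - μ))) +
      T (-l) * (T ((μ + l - m) * (μ + l) + μ * (μ - m)) *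
        (qbinomZ m μ * qbinomZ μ (m - l - μ))) := by
  rcases lt_or_ge μ 0 with hμ | hμ
  · simp [qbinomZ_of_neg hμ]
  lift μ to ℕ using hμ
  have hk : (m : ℤ) - l - μ - 1 = m - (l + 1) - μ := by ring
  rw [qbinomZ_succ, hk, ← mul_assoc (T (-(m : ℤ) - l)), ← mul_assoc (T (-l)), ← T_add, ← T_add]
  have hA : -(m : ℤ) - l + ((μ + (l + 1) - m) * (μ + (l + 1) - 1) + μ * (μ - m)) =
      (μ + l - m) * (μ + l) + (μ + 1) * (μ - m) := by ring
  have hB : -l + (((μ : ℤ) + l - m) * (μ + l) + μ * (μ - m)) =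
      ((μ + l - m) * (μ + l) + (μ + 1) * (μ - m)) + (m - l - μ) := by ring
  rw [hA, hB, T_add _ ((m : ℤ) - l - μ)]
  ring

/-- St_{m+1,l} = q^{-m-l} St_{m,l+1} + q^{-l} S_{m,l} + S_{m,l-1}. -/
theorem St_succ_rec3 (m : ℕ) (l : ℤ) :
    Sqt (m + 1) l =
      T (-(m : ℤ) - l) * Sqt m (l + 1) + T (-l) * Sq m l + Sq m (l - 1) := by
  have hsplit : ∀ ν : ℤ,
      T ((ν + l - (m + 1 : ℕ)) * (ν + l - 1) + ν * (ν - (m + 1 : ℕ))) *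
        (qbinomZ (m + 1 : ℕ) ν * qbinomZ ν ((m + 1 : ℕ) - l - ν)) =
      T ((ν + l - (m + 1)) * (ν + l - 1) + ν * (ν - (m + 1))) *
        (qbinomZ m (ν - 1) * qbinomZ ν (m + 1 - l - ν)) +
      T ((ν + (l - 1) - m) * (ν + (l - 1)) + ν * (ν - m)) *
        (qbinomZ m ν * qbinomZ ν (m - (l - 1) - ν)) := by
    intro ν
    push_cast
    have hk : (m : ℤ) - (l - 1) - ν = m + 1 - l - ν := by ring
    have hD : (ν + (l - 1) - m) * (ν + (l - 1)) + ν * (ν - m) =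
        ((ν + l - (m + 1)) * (ν + l - 1) + ν * (ν - (m + 1))) + ν := by ring
    rw [qbinomZ_succ, hk, hD, T_add _ ν]
    ring
  -- The part containing `C(m,ν-1)`, reindexed by `ν = μ + 1`.
  have hshift : ∀ μ : ℤ,
      T ((μ + 1 + l - (m + 1)) * (μ + 1 + l - 1) + (μ + 1) * (μ + 1 - (m + 1))) *
        (qbinomZ m (μ + 1 - 1) * qbinomZ (μ + 1) (m + 1 - l - (μ + 1))) =
      T ((μ + l - m) * (μ + l) + (μ + 1) * (μ - m)) *
        (qbinomZ m μ * qbinomZ (μ + 1) (m - l - μ)) := by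
    intro μ
    rw [show μ + 1 - 1 = μ by ring, show (m : ℤ) + 1 - l - (μ + 1) = m - l - μ by ring]
    congr 2
    ring
  have hfin : (Function.support fun ν : ℤ =>
      T ((ν + l - (m + 1)) * (ν + l - 1) + ν * (ν - (m + 1))) *
        (qbinomZ m (ν - 1) * qbinomZ ν (m + 1 - l - ν))).Finite := by
    refine (Set.finite_Icc 1 ((m : ℤ) + 1)).subset fun ν hν => ?_
    by_contra h
    rw [Set.mem_Icc] at h
    have h0 : qbinomZ m (ν - 1) = 0 := if_neg (by omega)
    exact hν (by simp [h0])
  unfold Sqt Sq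
  rw [finsum_congr hsplit, finsum_add_distrib hfin (finite_support_term _ _ _),
    ← finsum_comp_equiv (Equiv.addRight (1 : ℤ))]
  simp only [Equiv.coe_addRight]
  rw [finsum_congr hshift, finsum_congr (term_split m l), finsum_add_distrib,
    mul_finsum, mul_finsum]
  · simp only [← mul_assoc (T _) (T _)]
    exact finite_support_term _ _ _
  · simp only [← mul_assoc (T _) (T _)]
    exact finite_support_term _ _ _
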